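/- Let N ∈ ℕ and let Γ be a finite tree with vertex set V and edge set E, together with a finite set L of legs, each leg l ∈ L attached to a vertex v(l) ∈ V. Suppose given: for each vertex v a finite set I_v and a family of vectors u_v : I_v → ℝ^N; for each edge e, with endpoints ordered as (v_e, w_e), a finite set I_e containing I_{v_e} ∪ I_{w_e}, a linearly independent family u_e : I_e → ℝ^N restricting to u_{v_e} on I_{v_e} and to u_{w_e} on I_{w_e}, and integers a_e : I_e → ℤ determining the slope m_e = ∑_{i ∈ I_e} a_e(i)·u_e(i); and for each leg l a finite set I_l containing I_{v(l)}, a linearly independent family u_l : I_l → ℝ^N restricting to u_{v(l)}, and natural numbers a_l : I_l → ℕ determining m_l = ∑_{i ∈ I_l} a_l(i)·u_l(i). Assume: (small jumping) #(I_e ∖ I_{v_e}) ≤ 1 and #(I_e ∖ I_{w_e}) ≤ 1 for every edge e, and #(I_l ∖ I_{v(l)}) ≤ 1 for every leg l; (flag positivity) a_e(i) > 0 for every i ∈ I_e ∖ I_{v_e}, a_e(i) < 0 for every i ∈ I_e ∖ I_{w_e}, and a_l(i) > 0 for every i ∈ I_l ∖ I_{v(l)}; (slope negativity) if I_{v_e}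 ≠ I_e then a_e(j) ≤ 0 for all j ∈ I_{v_e}, and if I_{w_e} ≠ I_e then a_e(j) ≥ 0 for all j ∈ I_{w_e}. Then there exist edge lengths ℓ : E → ℝ with ℓ(e) > 0 for all e, and a map f : V → ℝ^N, such that: (i) for every vertex v, f(v) = ∑_{i ∈ I_v} μ_{v,i}·u_v(i) with all μ_{v,i} > 0; (ii) for every edge e, f(w_e) − f(v_e) = ℓ(e)·m_e; and (iii) for every leg l and every real t > 0, f(v(l)) + t·m_l = ∑_{i ∈ I_l} ν_i·u_l(i) with all ν_i > 0. -/

import Mathlib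

theorem tree_ext {V X : Type*} [DecidableEq V] (G : SimpleGraph V) (hG : G.IsTree)
    (P : V → X → Prop) (R : V → V → X → X → Prop)
    (hsymm : ∀ v w x y, R v w x y → R w v y x)
    (h0 : ∀ v, ∃ x, P v x)
    (hext : ∀ v w, G.Adj v w → ∀ x, P v x → ∃ y, P w y ∧ R v w x y) :
    ∃ F : V → X, (∀ v, P v (F v)) ∧ ∀ v w, G.Adj v w → R v w (F v) (F w) := by
  classical
  obtain ⟨r⟩ := hG.connected.nonempty
  obtain ⟨x0, hx0⟩ := h0 r
  choose g hg1 hg2 using hext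
  let A : ∀ v, G.Walk v r → {x // P v x} := fun v p =>
    SimpleGraph.Walk.rec (motive := fun v w _ => w = r → {x // P v x})
      (fun {u} h => ⟨x0, h ▸ hx0⟩)
      (fun {u v w} h p ih hw => ⟨g v u h.symm (ih hw).1 (ih hw).2, hg1 _ _ _ _ _⟩) p rfl
  have hA : ∀ v w (h : G.Adj v w) (p : G.Walk w r),
      R w v (A w p).1 (A v (SimpleGraph.Walk.cons h p)).1 :=
    fun v w h p => hg2 w v h.symm _ _
  choose q hq using fun v => (hG.connected v r).exists_isPath
  refine ⟨fun v => (A v (q v)).1, fun v => (A v (q v)).2, ?_⟩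
  intro v w h
  change R v w (A v (q v)).1 (A w (q w)).1
  by_cases hw : v ∈ (q w).support
  · have : q w = SimpleGraph.Walk.cons h.symm (q v) := by
      have hp := (hq w).dropUntil hw
      have e1 : (q w).dropUntil v hw = q v :=
        congrArg Subtype.val (hG.isAcyclic.path_unique ⟨_, hp⟩ ⟨_, hq v⟩)
      have e2 : (q w).takeUntil v hw = SimpleGraph.Walk.cons h.symm SimpleGraph.Walk.nil :=
        congrArg Subtype.val (hG.isAcyclic.path_unique ⟨_, (hq w).takeUntil hw⟩
          ⟨_, by simp [h.ne']⟩)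
      rw [← (q w).take_spec hw, e1, e2]; rfl
    rw [this]
    exact hA w v h.symm (q v)
  · have : q v = SimpleGraph.Walk.cons h (q w) :=
      congrArg Subtype.val (hG.isAcyclic.path_unique ⟨_, hq v⟩
          ⟨_, (hq w).cons hw⟩)
    rw [this]
    exact hsymm _ _ _ _ (hA v w h (q w))

theorem edge_ext {ι : Type*} [Fintype ι] [DecidableEq ι] (A B C : Finset ι)
    (hA : A ⊆ C) (hB : B ⊆ C) (a : ι → ℝ)
    (hj : (C \ B).card ≤ 1)
    (hpos : ∀ i ∈ C \ A, 0 < a i) (hneg : ∀ i ∈ C \ B, a i < 0)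
    (hs : B ≠ C → ∀ j ∈ B, 0 ≤ a j) (x : ι → ℝ)
    (hx : (∀ i ∈ A, 0 < x i) ∧ ∀ i ∉ A, x i = 0) :
    ∃ y : ι → ℝ, ((∀ i ∈ B, 0 < y i) ∧ ∀ i ∉ B, y i = 0) ∧
      ∃ l : ℝ, 0 < l ∧ ∀ i ∈ C, y i - x i = l * a i := by
  suffices h : ∃ l : ℝ, 0 < l ∧ (∀ i ∈ B, 0 < x i + l * a i) ∧ ∀ i ∈ C \ B, x i + l * a i = 0 by
    obtain ⟨l, hl, h1, h2⟩ := h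
    refine ⟨fun i => if i ∈ C then x i + l * a i else 0, ⟨?_, ?_⟩, l, hl, ?_⟩
    · intro i hi
      simpa [hB hi] using h1 i hi
    · intro i hi
      by_cases hc : i ∈ C
      · simpa [hc] using h2 i (by simp [hc, hi])
      · simp [hc]
    · intro i hi
      simp [hi]
  by_cases hBC : B = C
  · subst hBC
    have key : ∀ᶠ l in nhdsWithin (0:ℝ) (Set.Ioi 0), 0 < l ∧ ∀ i ∈ B, 0 < x i + l * a i := by
      refine Filter.Eventually.and self_mem_nhdsWithin ?_
      rw [Filter.eventually_all_finset]
      intro i hi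
      by_cases hiA : i ∈ A
      · have hc : Continuous fun l : ℝ => x i + l * a i := by fun_prop
        have := hc.tendsto 0
        simp only [zero_mul, add_zero] at this
        exact (this.eventually (lt_mem_nhds (hx.1 i hiA))).filter_mono nhdsWithin_le_nhds
      · filter_upwards [self_mem_nhdsWithin] with l hl
        have := hpos i (by simp [hi, hiA])
        have := mul_pos (Set.mem_Ioi.1 hl) this
        rw [hx.2 i hiA]; linarith
    obtain ⟨l, hl, h⟩ := key.exists
    exact ⟨l, hl, h, by simp⟩
  · obtain ⟨k, hk⟩ : (C \ B).Nonempty := by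
      rw [Finset.sdiff_nonempty]
      exact fun h => hBC (hB.antisymm h)
    have hkA : k ∈ A := by
      by_contra hkA
      have := hpos k (by simp at hk; simp [hk, hkA])
      have := hneg k hk
      linarith
    have hak := hneg k hk
    have hxk := hx.1 k hkA
    have hl : 0 < x k / (- a k) := div_pos hxk (by linarith)
    refine ⟨x k / (- a k), hl, ?_, ?_⟩
    · intro i hi
      by_cases hiA : i ∈ A
      · have := mul_nonneg hl.le (hs hBC i hi)
        have := hx.1 i hiA
        linarith
      · have := mul_pos hl (hpos i (by simp [hB hi, hiA]))
        rw [hx.2 i hiA]; linarith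
    · intro i hi
      have : i = k := Finset.card_le_one.1 hj i hi k hk
      subst this
      have := hak.ne
      field_simp
      ring


/-- Tropical smoothing of combinatorial types over slope-sensitive targets.

A finite tree on vertex set `V` is encoded by a finite edge set `E` with
ordered endpoint maps `vend, wend : E → V` (no loops, no multiple edges, and
the resulting simple graph is a tree), together with a finite set `L` of legs
attached via `vleg : L → V`.  Cones of the (smooth, simplicial) target cone
complex are encoded by finite subsets of a global index set `ι` of rays with
generators `u : ι → ℝ^N`: each vertex `v` carries the cone on `Iv v`, each
edge `e` the cone on `IE e ⊇ Iv (vend e) ∪ Iv (wend e)` with `u` linearly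
independent on `IE e`, and each leg `l` the cone on `IL l ⊇ Iv (vleg l)` with
`u` linearly independent on `IL l`.  Slopes are `m_e = ∑_{i ∈ IE e} aE e i • u i`
and `m_l = ∑_{i ∈ IL l} aL l i • u i`.  Under the small-jumping, flag-positivity
and slope-negativity hypotheses there exist strictly positive edge lengths `ℓ`
and a map `f : V → ℝ^N` such that each vertex maps to the relative interior of
its cone, each edge is traversed affinely with its prescribed slope, and each
leg stays in the relative interior of its cone. -/
theorem stmt6 (N : ℕ) {V E L ι : Type*}
    [Fintype V] [DecidableEq V] [Fintype E] [Fintype L]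
    [Fintype ι] [DecidableEq ι]
    (vend wend : E → V) (vleg : L → V)
    (hne : ∀ e, vend e ≠ wend e)
    (hedgeinj : Function.Injective (fun e => s(vend e, wend e)))
    (htree : (SimpleGraph.fromEdgeSet (Set.range fun e => s(vend e, wend e))).IsTree)
    (u : ι → (Fin N → ℝ))
    (Iv : V → Finset ι) (IE : E → Finset ι) (IL : L → Finset ι)
    (hIE₁ : ∀ e, Iv (vend e) ⊆ IE e) (hIE₂ : ∀ e, Iv (wend e) ⊆ IE e)
    (hIL : ∀ l, Iv (vleg l) ⊆ IL l)
    (hindE : ∀ e, LinearIndependent ℝ (fun i : (IE e : Set ι) => u i))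
    (hindL : ∀ l, LinearIndependent ℝ (fun i : (IL l : Set ι) => u i))
    (aE : E → ι → ℤ) (aL : L → ι → ℕ)
    (hjumpE₁ : ∀ e, (IE e \ Iv (vend e)).card ≤ 1)
    (hjumpE₂ : ∀ e, (IE e \ Iv (wend e)).card ≤ 1)
    (hjumpL : ∀ l, (IL l \ Iv (vleg l)).card ≤ 1)
    (hposE : ∀ e, ∀ i ∈ IE e \ Iv (vend e), 0 < aE e i)
    (hnegE : ∀ e, ∀ i ∈ IE e \ Iv (wend e), aE e i < 0)
    (hposL : ∀ l, ∀ i ∈ IL l \ Iv (vleg l), 0 < aL l i)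
    (hslope₁ : ∀ e, Iv (vend e) ≠ IE e → ∀ j ∈ Iv (vend e), aE e j ≤ 0)
    (hslope₂ : ∀ e, Iv (wend e) ≠ IE e → ∀ j ∈ Iv (wend e), 0 ≤ aE e j) :
    ∃ (ℓ : E → ℝ) (f : V → (Fin N → ℝ)),
      (∀ e, 0 < ℓ e) ∧
      (∀ v : V, ∃ μ : ι → ℝ, (∀ i ∈ Iv v, 0 < μ i) ∧
        f v = ∑ i ∈ Iv v, μ i • u i) ∧
      (∀ e : E, f (wend e) - f (vend e)
        = ℓ e • ∑ i ∈ IE e, (aE e i : ℝ) • u i) ∧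
      (∀ l : L, ∀ t : ℝ, 0 < t →
        ∃ ν : ι → ℝ, (∀ i ∈ IL l, 0 < ν i) ∧
          f (vleg l) + t • ∑ i ∈ IL l, (aL l i : ℝ) • u i
            = ∑ i ∈ IL l, ν i • u i) := by
  classical
  have main := tree_ext (X := ι → ℝ) _ htree
    (fun v x => (∀ i ∈ Iv v, 0 < x i) ∧ ∀ i ∉ Iv v, x i = 0)
    (fun v w x y => ∃ e, ∃ l : ℝ, 0 < l ∧
      ((vend e = v ∧ wend e = w ∧ ∀ i ∈ IE e, y i - x i = l * aE e i) ∨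
       (vend e = w ∧ wend e = v ∧ ∀ i ∈ IE e, x i - y i = l * aE e i)))
    (by
      rintro v w x y ⟨e, l, hl, h⟩
      exact ⟨e, l, hl, h.symm⟩)
    (fun v => ⟨fun i => if i ∈ Iv v then 1 else 0, by simp +contextual, by simp +contextual⟩)
    (by
      intro v w hvw x hx
      rw [SimpleGraph.fromEdgeSet_adj] at hvw
      obtain ⟨⟨e, he⟩, -⟩ := hvw
      rcases Sym2.eq_iff.1 he with ⟨rfl, rfl⟩ | ⟨rfl, rfl⟩
      · obtain ⟨y, hy, l, hl, h⟩ := edge_ext (Iv (vend e)) (Iv (wend e)) (IE e) (hIE₁ e) (hIE₂ e)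
          (fun i => (aE e i : ℝ)) (hjumpE₂ e)
          (fun i hi => by exact_mod_cast hposE e i hi)
          (fun i hi => by exact_mod_cast hnegE e i hi)
          (fun hn i hi => by exact_mod_cast hslope₂ e hn i hi) x hx
        exact ⟨y, hy, e, l, hl, Or.inl ⟨rfl, rfl, h⟩⟩
      · obtain ⟨y, hy, l, hl, h⟩ := edge_ext (Iv (wend e)) (Iv (vend e)) (IE e) (hIE₂ e) (hIE₁ e)
          (fun i => -(aE e i : ℝ)) (hjumpE₁ e)
          (fun i hi => by
            have := hnegE e i hi
            have : (aE e i : ℝ) < 0 := by exact_mod_cast this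
            linarith)
          (fun i hi => by
            have := hposE e i hi
            have : (0 : ℝ) < aE e i := by exact_mod_cast this
            linarith)
          (fun hn i hi => by
            have := hslope₁ e hn i hi
            have : (aE e i : ℝ) ≤ 0 := by exact_mod_cast this
            linarith) x hx
        refine ⟨y, hy, e, l, hl, Or.inr ⟨rfl, rfl, fun i hi => ?_⟩⟩
        have := h i hi
        linarith)
  obtain ⟨F, hF, hR⟩ := main
  have hE : ∀ e, ∃ l : ℝ, 0 < l ∧ ∀ i ∈ IE e, F (wend e) i - F (vend e) i = l * aE e i := by
    intro e
    obtain ⟨e', l, hl, h⟩ := hR (vend e) (wend e)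
      ((SimpleGraph.fromEdgeSet_adj _).2 ⟨⟨e, rfl⟩, hne e⟩)
    have hee : e' = e := by
      apply hedgeinj
      rcases h with ⟨h1, h2, -⟩ | ⟨h1, h2, -⟩
      · simp [h1, h2]
      · simp [h1, h2, Sym2.eq_swap]
    subst hee
    rcases h with ⟨h1, h2, h⟩ | ⟨h1, h2, h⟩
    · exact ⟨l, hl, h⟩
    · exact absurd h1 (hne _)
  choose l hl hlF using hE
  have hsum : ∀ v (S : Finset ι), Iv v ⊆ S →
      ∑ i ∈ Iv v, F v i • u i = ∑ i ∈ S, F v i • u i := by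
    intro v S hS
    refine Finset.sum_subset hS fun i _ hi => ?_
    rw [(hF v).2 i hi, zero_smul]
  refine ⟨l, fun v => ∑ i ∈ Iv v, F v i • u i, hl, fun v => ⟨F v, (hF v).1, rfl⟩, ?_, ?_⟩
  · intro e
    simp only
    rw [hsum _ _ (hIE₁ e), hsum _ _ (hIE₂ e), ← Finset.sum_sub_distrib, Finset.smul_sum]
    refine Finset.sum_congr rfl fun i hi => ?_
    rw [← sub_smul, hlF e i hi, mul_smul]
  · intro k t ht
    refine ⟨fun i => F (vleg k) i + t * aL k i, ?_, ?_⟩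
    · intro i hi
      by_cases hiv : i ∈ Iv (vleg k)
      · have := (hF (vleg k)).1 i hiv
        positivity
      · have h1 := hposL k i (by simp [hi, hiv])
        simp only [(hF (vleg k)).2 i hiv, zero_add]
        positivity
    · simp only
      rw [hsum _ _ (hIL k), Finset.smul_sum, ← Finset.sum_add_distrib]
      refine Finset.sum_congr rfl fun i hi => ?_
      rw [add_smul, mul_smul]
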